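/- arXiv:0902.1358 — 7 statements merged into one kernel-verified Lean document; each statement's English description precedes it below -/
import Mathlib

section
/- For every element h of H(0), one has ψ₀(h) ∈ N(∞) × N(∞) if and only if h ∈ N(∞). Equivalently, the induced homomorphism ψ_∞ : H(∞) → Γ × Γ, where Γ = F/N(∞) and H(∞) is the image of H(0) in Γ, is injective. -/
/-- The four-letter alphabet `{a, b, c, d}`. -/
inductive L4 : Type
  | a | b | c | d
  deriving DecidableEq

/-- The free group `F = F(a, b, c, d)`. -/
abbrev F4 : Type := FreeGroup L4

def ga : F4 := FreeGroup.of L4.a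
def gb : F4 := FreeGroup.of L4.b
def gc : F4 := FreeGroup.of L4.c
def gd : F4 := FreeGroup.of L4.d

/-- The endomorphism `σ` of `F(a,b,c,d)`:
`σ(a) = aca`, `σ(b) = d`, `σ(c) = b`, `σ(d) = c`. -/
def sigma : F4 →* F4 :=
  FreeGroup.lift fun x => match x with
    | L4.a => ga * gc * ga
    | L4.b => gd
    | L4.c => gb
    | L4.d => gc

/-- A seven-letter alphabet corresponding to the free generators
`b, c, d, aba, aca, ada, a²` of the index-2 subgroup `H(0)` of `F`. -/
inductive E7 : Type
  | eb | ec | ed | eaba | eaca | eada | eaa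
  deriving DecidableEq

/-- The embedding of the free group on the seven generators into `F`, sending
the generators to `b, c, d, aba, aca, ada, a²`; its range is `H(0)`. -/
def iota : FreeGroup E7 →* F4 :=
  FreeGroup.lift fun x => match x with
    | E7.eb => gb
    | E7.ec => gc
    | E7.ed => gd
    | E7.eaba => ga * gb * ga
    | E7.eaca => ga * gc * ga
    | E7.eada => ga * gd * ga
    | E7.eaa => ga ^ 2

/-- The homomorphism `ψ₀ : H(0) → F × F` (written on the free generators of
`H(0)`): `ψ₀(b) = (a,c)`, `ψ₀(c) = (a,d)`, `ψ₀(d) = (1,b)`, `ψ₀(aba) = (c,a)`,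
`ψ₀(aca) = (d,a)`, `ψ₀(ada) = (b,1)`, `ψ₀(a²) = (1,1)`. -/
def psi : FreeGroup E7 →* F4 × F4 :=
  FreeGroup.lift fun x => match x with
    | E7.eb => (ga, gc)
    | E7.ec => (ga, gd)
    | E7.ed => (1, gb)
    | E7.eaba => (gc, ga)
    | E7.eaca => (gd, ga)
    | E7.eada => (gb, 1)
    | E7.eaa => (1, 1)

/-- The relator set `R(i)` of the presentation `Γ(i)`, `1 ≤ i < ∞`:
`R(1) = {a², b², c², d², bcd, (ad)⁴}` and, for `i ≥ 2`,
`R(i) = R(1) ∪ {σʲ((ad)⁴) : 1 ≤ j ≤ i−1} ∪ {σʲ((adacac)⁴) : 0 ≤ j ≤ i−2}`. -/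
def Rpres (i : ℕ) : Set F4 :=
  {ga ^ 2, gb ^ 2, gc ^ 2, gd ^ 2, gb * gc * gd, (ga * gd) ^ 4}
    ∪ {w | ∃ j : ℕ, 1 ≤ j ∧ j + 1 ≤ i ∧ w = (⇑sigma)^[j] ((ga * gd) ^ 4)}
    ∪ {w | ∃ j : ℕ, j + 2 ≤ i ∧ w = (⇑sigma)^[j] ((ga * gd * ga * gc * ga * gc) ^ 4)}

/-- The Lysenok relator set
`R(∞) = {a², b², c², d², bcd} ∪ {σⁱ((ad)⁴) : i ≥ 0} ∪ {σⁱ((adacac)⁴) : i ≥ 0}`. -/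
def Rinf : Set F4 :=
  {ga ^ 2, gb ^ 2, gc ^ 2, gd ^ 2, gb * gc * gd}
    ∪ {w | ∃ i : ℕ, w = (⇑sigma)^[i] ((ga * gd) ^ 4)}
    ∪ {w | ∃ i : ℕ, w = (⇑sigma)^[i] ((ga * gd * ga * gc * ga * gc) ^ 4)}


section DihedralLift

variable {G : Type*} [Group G]

theorem zpw_add (t : G) (ht : t ^ 4 = 1) (i j : ZMod 4) :
    t ^ (i + j).val = t ^ i.val * t ^ j.val := by
  rw [ZMod.val_add, ← pow_add]
  exact (pow_eq_pow_mod _ ht).symm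

theorem zpw_sub (t : G) (ht : t ^ 4 = 1) (i j : ZMod 4) :
    t ^ (j - i).val = (t ^ i.val)⁻¹ * t ^ j.val := by
  rw [eq_inv_mul_iff_mul_eq, ← zpw_add t ht, add_sub_cancel]

theorem x_pow_conj (x y : G) (hx : x * x = 1) (hy : y * y = 1) (n : ℕ) :
    (x * y) ^ n * x = x * ((x * y) ^ n)⁻¹ := by
  have hxi : x⁻¹ = x := inv_eq_of_mul_eq_one_left hx
  have hyi : y⁻¹ = y := inv_eq_of_mul_eq_one_left hy
  have h : SemiconjBy x (x * y)⁻¹ (x * y) := by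
    unfold SemiconjBy
    rw [mul_inv_rev, hxi, hyi]
    group
  have := h.pow_right n
  unfold SemiconjBy at this
  rw [← this, inv_pow]

def dlift (x y : G) (hx : x * x = 1) (hy : y * y = 1) (hxy : (x * y) ^ 4 = 1) :
    DihedralGroup 4 →* G where
  toFun k := match k with
    | DihedralGroup.r i => (x * y) ^ i.val
    | DihedralGroup.sr i => x * (x * y) ^ i.val
  map_one' := by
    rw [DihedralGroup.one_def]
    simp
  map_mul' := by
    have hc := x_pow_conj x y hx hy
    rintro (i | i) (j | j)
    · simp only [DihedralGroup.r_mul_r]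
      exact zpw_add _ hxy i j
    · simp only [DihedralGroup.r_mul_sr]
      rw [zpw_sub _ hxy, ← mul_assoc, ← mul_assoc, hc]
    · simp only [DihedralGroup.sr_mul_r]
      rw [zpw_add _ hxy, mul_assoc]
    · simp only [DihedralGroup.sr_mul_sr]
      rw [zpw_sub _ hxy, mul_assoc, ← mul_assoc _ x, hc, ← mul_assoc, ← mul_assoc, hx, one_mul]

abbrev s0 : DihedralGroup 4 := DihedralGroup.sr 0
abbrev s1 : DihedralGroup 4 := DihedralGroup.sr 1

theorem dlift_s0 (x y : G) (hx : x * x = 1) (hy : y * y = 1) (hxy : (x * y) ^ 4 = 1) :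
    dlift x y hx hy hxy s0 = x := by
  change x * (x * y) ^ (0 : ZMod 4).val = x
  simp

theorem dlift_s1 (x y : G) (hx : x * x = 1) (hy : y * y = 1) (hxy : (x * y) ^ 4 = 1) :
    dlift x y hx hy hxy s1 = y := by
  change x * (x * y) ^ (1 : ZMod 4).val = y
  rw [show (1 : ZMod 4).val = 1 from rfl, pow_one, ← mul_assoc, hx, one_mul]

theorem d_list (k : DihedralGroup 4) : k = 1 ∨ k = s1 ∨ k = s0 ∨ k = s1 * s0 ∨ k = s0 * s1 ∨
    k = s1 * (s0 * s1) ∨ k = s0 * (s1 * s0) ∨ k = s1 * (s0 * (s1 * s0)) := by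
  revert k; decide

theorem d_pow (k : DihedralGroup 4) : k ^ 4 = 1 := by
  revert k; decide

theorem d_ext {f g : DihedralGroup 4 →* G} (h0 : f s0 = g s0) (h1 : f s1 = g s1) : f = g := by
  ext k
  rcases d_list k with h | h | h | h | h | h | h | h <;> subst h <;> simp only [map_mul, map_one, h0, h1]

end DihedralLift

/-! The group `Γ`. -/

abbrev Nn : Subgroup F4 := Subgroup.normalClosure Rinf
abbrev Gam : Type := F4 ⧸ Nn
def pr : F4 →* Gam := QuotientGroup.mk' Nn
def gA : Gam := pr ga
def gB : Gam := pr gb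
def gC : Gam := pr gc
def gD : Gam := pr gd

theorem pr_eq_one {w : F4} : pr w = 1 ↔ w ∈ Nn := QuotientGroup.eq_one_iff w

theorem pr_rel {w : F4} (h : w ∈ Rinf) : pr w = 1 :=
  pr_eq_one.2 (Subgroup.subset_normalClosure h)

theorem AA : gA * gA = 1 := by
  have := pr_rel (w := ga ^ 2) (by simp [Rinf])
  rwa [pow_two, map_mul] at this
theorem BB : gB * gB = 1 := by
  have := pr_rel (w := gb ^ 2) (by simp [Rinf])
  rwa [pow_two, map_mul] at this
theorem CC : gC * gC = 1 := by
  have := pr_rel (w := gc ^ 2) (by simp [Rinf])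
  rwa [pow_two, map_mul] at this
theorem DD : gD * gD = 1 := by
  have := pr_rel (w := gd ^ 2) (by simp [Rinf])
  rwa [pow_two, map_mul] at this
theorem BCD : gB * gC * gD = 1 := by
  have := pr_rel (w := gb * gc * gd) (by simp [Rinf])
  rwa [map_mul, map_mul] at this

theorem Ai : gA⁻¹ = gA := inv_eq_of_mul_eq_one_left AA
theorem Bi : gB⁻¹ = gB := inv_eq_of_mul_eq_one_left BB
theorem Ci : gC⁻¹ = gC := inv_eq_of_mul_eq_one_left CC
theorem Di : gD⁻¹ = gD := inv_eq_of_mul_eq_one_left DD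

theorem BC : gB * gC = gD := by rw [← Di]; exact eq_inv_of_mul_eq_one_left BCD
theorem CB : gC * gB = gD := by rw [← Ci, ← Bi, ← mul_inv_rev, BC, Di]
theorem CD : gC * gD = gB := by rw [← BC, ← mul_assoc, CB, ← BC, mul_assoc, CC, mul_one]
theorem DC : gD * gC = gB := by rw [← BC, mul_assoc, CC, mul_one]
theorem BD : gB * gD = gC := by rw [← BC, ← mul_assoc, BB, one_mul]
theorem DB : gD * gB = gC := by rw [← CB, mul_assoc, BB, mul_one]

theorem ext1 {x y z : Gam} (h : x * y = z) (w : Gam) : x * (y * w) = z * w := by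
  rw [← mul_assoc, h]

theorem AA' (w : Gam) : gA * (gA * w) = w := by rw [ext1 AA, one_mul]
theorem BB' (w : Gam) : gB * (gB * w) = w := by rw [ext1 BB, one_mul]
theorem CC' (w : Gam) : gC * (gC * w) = w := by rw [ext1 CC, one_mul]
theorem DD' (w : Gam) : gD * (gD * w) = w := by rw [ext1 DD, one_mul]
theorem BC' (w : Gam) : gB * (gC * w) = gD * w := ext1 BC w
theorem CB' (w : Gam) : gC * (gB * w) = gD * w := ext1 CB w
theorem CD' (w : Gam) : gC * (gD * w) = gB * w := ext1 CD w
theorem DC' (w : Gam) : gD * (gC * w) = gB * w := ext1 DC w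
theorem BD' (w : Gam) : gB * (gD * w) = gC * w := ext1 BD w
theorem DB' (w : Gam) : gD * (gB * w) = gC * w := ext1 DB w

theorem pr_it1 (i : ℕ) : pr ((⇑sigma)^[i] ((ga * gd) ^ 4)) = 1 :=
  pr_rel (Or.inl (Or.inr ⟨i, rfl⟩))
theorem pr_it2 (i : ℕ) : pr ((⇑sigma)^[i] ((ga * gd * ga * gc * ga * gc) ^ 4)) = 1 :=
  pr_rel (Or.inr ⟨i, rfl⟩)

theorem AD4 : (gA * gD) ^ 4 = 1 := by
  have := pr_it1 0
  simp only [Function.iterate_zero, id, map_pow, map_mul] at this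
  exact this
theorem ADACAC4 : (gA * gD * gA * gC * gA * gC) ^ 4 = 1 := by
  have := pr_it2 0
  simp only [Function.iterate_zero, id, map_pow, map_mul] at this
  exact this

@[simp] theorem sig_a : sigma ga = ga * gc * ga := by simp [sigma, ga]
@[simp] theorem sig_b : sigma gb = gd := by simp [sigma, gb]
@[simp] theorem sig_c : sigma gc = gb := by simp [sigma, gc]
@[simp] theorem sig_d : sigma gd = gc := by simp [sigma, gd]

/-- Generic lifting criterion: a hom from `F4` killing the relators kills `Nn`. -/
theorem kills {G : Type*} [Group G] (f : F4 →* G)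
    (ha : f ga * f ga = 1) (hb : f gb * f gb = 1) (hc : f gc * f gc = 1) (hd : f gd * f gd = 1)
    (hbcd : f gb * f gc * f gd = 1)
    (h1 : ∀ i : ℕ, f ((⇑sigma)^[i] ((ga * gd) ^ 4)) = 1)
    (h2 : ∀ i : ℕ, f ((⇑sigma)^[i] ((ga * gd * ga * gc * ga * gc) ^ 4)) = 1) :
    Nn ≤ f.ker := by
  apply Subgroup.normalClosure_le_normal
  intro w hw
  change f w = 1
  rcases hw with (hw | ⟨i, rfl⟩) | ⟨i, rfl⟩
  · rcases hw with rfl | rfl | rfl | rfl | rfl <;> simpa [pow_two]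
  · exact h1 i
  · exact h2 i

theorem iter_pow (i : ℕ) (u : F4) : ∃ v : F4, (⇑sigma)^[i] (u ^ 4) = v ^ 4 :=
  ⟨(⇑sigma)^[i] u, by
    induction i generalizing u with
    | zero => rfl
    | succ n ih => rw [Function.iterate_succ_apply, map_pow, ih, Function.iterate_succ_apply]⟩

def homF {G : Type*} [Group G] (x y z w : G) : F4 →* G :=
  FreeGroup.lift fun l => match l with
    | L4.a => x
    | L4.b => y
    | L4.c => z
    | L4.d => w

section
variable {G : Type*} [Group G] (x y z w : G)
@[simp] theorem homF_a : homF x y z w ga = x := by simp [homF, ga]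
@[simp] theorem homF_b : homF x y z w gb = y := by simp [homF, gb]
@[simp] theorem homF_c : homF x y z w gc = z := by simp [homF, gc]
@[simp] theorem homF_d : homF x y z w gd = w := by simp [homF, gd]

theorem homF_ext {f g : F4 →* G} (ha : f ga = g ga) (hb : f gb = g gb) (hc : f gc = g gc)
    (hd : f gd = g gd) : f = g := by
  apply FreeGroup.ext_hom
  rintro (_ | _ | _ | _)
  · exact ha
  · exact hb
  · exact hc
  · exact hd

theorem gam_ext {f g : Gam →* G} (ha : f gA = g gA) (hb : f gB = g gB) (hc : f gC = g gC)
    (hd : f gD = g gD) : f = g :=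
  QuotientGroup.monoidHom_ext _ (homF_ext ha hb hc hd)
end

/-- map `F → D₈`. -/
def q0 : F4 →* DihedralGroup 4 := homF s0 1 s1 s1

theorem q0_kills : Nn ≤ q0.ker := by
  apply kills
  · simp only [q0, homF_a]; decide
  · simp only [q0, homF_b]; decide
  · simp only [q0, homF_c]; decide
  · simp only [q0, homF_d]; decide
  · simp only [q0, homF_b, homF_c, homF_d]; decide
  · intro i
    obtain ⟨v, hv⟩ := iter_pow i (ga * gd)
    rw [hv, map_pow, d_pow]
  · intro i
    obtain ⟨v, hv⟩ := iter_pow i (ga * gd * ga * gc * ga * gc)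
    rw [hv, map_pow, d_pow]

def q : Gam →* DihedralGroup 4 := QuotientGroup.lift Nn q0 q0_kills
theorem q_pr (w : F4) : q (pr w) = q0 w := rfl
theorem q_A : q gA = s0 := by simp [gA, q_pr, q0]
theorem q_B : q gB = 1 := by simp [gB, q_pr, q0]
theorem q_C : q gC = s1 := by simp [gC, q_pr, q0]
theorem q_D : q gD = s1 := by simp [gD, q_pr, q0]

/-- the endomorphism induced by `σ`. -/
theorem S_kills : Nn ≤ (pr.comp sigma).ker := by
  apply kills
  · simp only [MonoidHom.comp_apply, sig_a, map_mul]
    change (gA * gC * gA) * (gA * gC * gA) = 1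
    simp only [mul_assoc, AA', CC', AA]
  · simp only [MonoidHom.comp_apply, sig_b]; exact DD
  · simp only [MonoidHom.comp_apply, sig_c]; exact BB
  · simp only [MonoidHom.comp_apply, sig_d]; exact CC
  · simp only [MonoidHom.comp_apply, sig_b, sig_c, sig_d]
    change gD * gB * gC = 1
    rw [DB, CC]
  · intro i
    rw [MonoidHom.comp_apply, ← Function.iterate_succ_apply' (⇑sigma)]
    exact pr_it1 _
  · intro i
    rw [MonoidHom.comp_apply, ← Function.iterate_succ_apply' (⇑sigma)]
    exact pr_it2 _

def S : Gam →* Gam := QuotientGroup.lift Nn (pr.comp sigma) S_kills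
theorem S_pr (w : F4) : S (pr w) = pr (sigma w) := rfl
theorem S_A : S gA = gA * gC * gA := by rw [gA, S_pr, sig_a]; rfl
theorem S_B : S gB = gD := by rw [gB, S_pr, sig_b]; rfl
theorem S_C : S gC = gB := by rw [gC, S_pr, sig_c]; rfl
theorem S_D : S gD = gC := by rw [gD, S_pr, sig_d]; rfl

def T : Gam →* Gam := (MulAut.conj gA).toMonoidHom.comp S
theorem T_def (w : Gam) : T w = gA * S w * gA := by
  change gA * S w * gA⁻¹ = _
  rw [Ai]
theorem T_A : T gA = gC := by
  rw [T_def, S_A]; simp only [mul_assoc, AA', AA, mul_one]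
theorem T_B : T gB = gA * gD * gA := by rw [T_def, S_B]
theorem T_D : T gD = gA * gC * gA := by rw [T_def, S_D]

def f1 : DihedralGroup 4 →* Gam := dlift gA gD AA DD AD4
def f2 : DihedralGroup 4 →* Gam := dlift gD gA DD AA (by
  have h : gD * gA = (gA * gD)⁻¹ := by rw [mul_inv_rev, Ai, Di]
  rw [h, inv_pow, AD4, inv_one])
def f : DihedralGroup 4 →* Gam := S.comp f2
theorem f1_0 : f1 s0 = gA := dlift_s0 _ _ _ _ _
theorem f1_1 : f1 s1 = gD := dlift_s1 _ _ _ _ _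
theorem f2_0 : f2 s0 = gD := dlift_s0 _ _ _ _ _
theorem f2_1 : f2 s1 = gA := dlift_s1 _ _ _ _ _
theorem f_0 : f s0 = gC := by rw [f, MonoidHom.comp_apply, f2_0, S_D]
theorem f_1 : f s1 = gA * gC * gA := by rw [f, MonoidHom.comp_apply, f2_1, S_A]
theorem f_S (k) : f k = S (f2 k) := rfl
theorem f_T (k) : f k = T (f1 k) := by
  have : f = T.comp f1 := by
    apply d_ext
    · rw [f_0, MonoidHom.comp_apply, f1_0, T_A]
    · rw [f_1, MonoidHom.comp_apply, f1_1, T_D]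
  rw [this, MonoidHom.comp_apply]
theorem q_f1 (k) : q (f1 k) = k := by
  have : q.comp f1 = MonoidHom.id _ := by
    apply d_ext
    · rw [MonoidHom.comp_apply, f1_0, q_A]; rfl
    · rw [MonoidHom.comp_apply, f1_1, q_D]; rfl
  exact DFunLike.congr_fun this k

/-! The wreath-type representation. -/

section Wreath
variable {G : Type*} [Group G]

def jj : G × G →* Equiv.Perm (G × Bool) where
  toFun p :=
    { toFun := fun x => (cond x.2 p.2 p.1 * x.1, x.2)
      invFun := fun x => ((cond x.2 p.2 p.1)⁻¹ * x.1, x.2)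
      left_inv := by rintro ⟨g, _ | _⟩ <;> simp
      right_inv := by rintro ⟨g, _ | _⟩ <;> simp }
  map_one' := by
    ext ⟨g, _ | _⟩ <;> simp
  map_mul' := by
    intro p p'
    ext ⟨g, _ | _⟩ <;> simp [mul_assoc]

theorem jj_inj {p : G × G} (h : jj p = 1) : p = 1 := by
  have h0 := DFunLike.congr_fun h ((1 : G), false)
  have h1 := DFunLike.congr_fun h ((1 : G), true)
  simp [jj] at h0 h1
  exact Prod.ext h0 h1

def sw : Equiv.Perm (G × Bool) where
  toFun x := (x.1, !x.2)
  invFun x := (x.1, !x.2)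
  left_inv := by rintro ⟨g, _ | _⟩ <;> simp
  right_inv := by rintro ⟨g, _ | _⟩ <;> simp

theorem sw_sw : (sw : Equiv.Perm (G × Bool)) * sw = 1 := by
  ext ⟨g, _ | _⟩ <;> simp [sw]

theorem sw_jj (x y : G) : sw * jj (x, y) = jj (y, x) * sw := by
  ext ⟨g, _ | _⟩ <;> simp [sw, jj]

theorem sw_jj_sw (x y : G) : sw * jj (x, y) * sw = jj (y, x) := by
  rw [sw_jj, mul_assoc, sw_sw, mul_one]
end Wreath

def Phi0 : F4 →* Equiv.Perm (Gam × Bool) :=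
  homF sw (jj (gA, gC)) (jj (gA, gD)) (jj (1, gB))

theorem Phi0_sigma (w : F4) : Phi0 (sigma w) = jj (f2 (q0 w), pr w) := by
  have : Phi0.comp sigma = jj.comp ((f2.comp q0).prod pr) := by
    apply homF_ext
    · simp [Phi0, q0, f2_0]
      rw [sw_jj_sw]; rfl
    · simp [Phi0, q0]; rfl
    · simp [Phi0, q0, f2_1]; rfl
    · simp [Phi0, q0, f2_1]; rfl
  exact DFunLike.congr_fun this w

theorem Phi_kills : Nn ≤ Phi0.ker := by
  have hAD : Phi0 (ga * gd * ga * gd) = jj (gB, gB) := by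
    simp only [Phi0, map_mul, homF_a, homF_d]
    rw [sw_jj_sw, ← map_mul]; simp
  have hL : Phi0 ((ga * gd * ga * gc * ga * gc) * (ga * gd * ga * gc * ga * gc)) =
      jj (gB, gD * gA * gB * gA * gD) := by
    have : (ga * gd * ga * gc * ga * gc) * (ga * gd * ga * gc * ga * gc) =
      (ga * gd * ga) * gc * (ga * gc * ga) * gd * (ga * gc * ga) * gc := by group
    rw [this]
    simp only [Phi0, map_mul, homF_a, homF_d, homF_c]
    simp only [sw_jj_sw, ← map_mul, Prod.mk_mul_mk]
    simp only [mul_assoc, one_mul, mul_one, DD', AA', AA, DD]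
  apply kills
  · simp only [Phi0, homF_a, sw_sw]
  · simp only [Phi0, homF_b, ← map_mul, Prod.mk_mul_mk, AA, CC]; exact map_one _
  · simp only [Phi0, homF_c, ← map_mul, Prod.mk_mul_mk, AA, DD]; exact map_one _
  · simp only [Phi0, homF_d, ← map_mul, Prod.mk_mul_mk, BB, mul_one]; exact map_one _
  · simp only [Phi0, homF_b, homF_c, homF_d, ← map_mul, Prod.mk_mul_mk, AA, CD, BB, mul_one]
    exact map_one _
  · rintro (_ | i)
    · have : (ga * gd) ^ 4 = (ga * gd * ga * gd) * (ga * gd * ga * gd) := by simp only [pow_succ, pow_zero, one_mul, mul_assoc]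
      rw [Function.iterate_zero, id, this, map_mul, hAD, ← map_mul, Prod.mk_mul_mk, BB]
      exact map_one _
    · rw [Function.iterate_succ_apply', Phi0_sigma, pr_it1]
      obtain ⟨v, hv⟩ := iter_pow i (ga * gd)
      rw [hv, map_pow, d_pow, map_one]
      exact map_one _
  · rintro (_ | i)
    · have h4 : ∀ u : F4, u ^ 4 = (u * u) * (u * u) := by intro u; simp only [pow_succ, pow_zero, one_mul, mul_assoc]
      rw [Function.iterate_zero, id, h4, map_mul, hL, ← map_mul, Prod.mk_mul_mk, BB]
      simp only [mul_assoc, DD', AA', BB', DD]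
      exact map_one _
    · rw [Function.iterate_succ_apply', Phi0_sigma, pr_it2]
      obtain ⟨v, hv⟩ := iter_pow i (ga * gd * ga * gc * ga * gc)
      rw [hv, map_pow, d_pow, map_one]
      exact map_one _

def Phi : Gam →* Equiv.Perm (Gam × Bool) := QuotientGroup.lift Nn Phi0 Phi_kills
theorem Phi_pr (w : F4) : Phi (pr w) = Phi0 w := rfl

theorem Phi_S (g : Gam) : Phi (S g) = jj (f2 (q g), g) := by
  obtain ⟨w, rfl⟩ := QuotientGroup.mk_surjective g
  exact Phi0_sigma w

theorem Phi_T (g : Gam) : Phi (T g) = jj (g, f2 (q g)) := by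
  have hA : Phi gA = sw := by rw [gA, Phi_pr, Phi0, homF_a]
  rw [T_def, map_mul, map_mul, Phi_S, hA, sw_jj_sw]

theorem Phi_iota (e : FreeGroup E7) :
    Phi (pr (iota e)) = jj (pr (psi e).1, pr (psi e).2) := by
  have : (Phi.comp pr).comp iota = jj.comp ((pr.prodMap pr).comp psi) := by
    apply FreeGroup.ext_hom
    rintro (_ | _ | _ | _ | _ | _ | _) <;>
      simp [Phi_pr, iota, psi, Phi0, sw_jj_sw, pow_two, sw_sw] <;> first | rfl | exact (map_one _).symm
  exact DFunLike.congr_fun this e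

/-! Commutation. -/

abbrev NB : Subgroup Gam := Subgroup.normalClosure {gB}

def NB' : Subgroup Gam := Subgroup.closure (Set.range fun k => f1 k * gB * (f1 k)⁻¹)

theorem NB'_f1 (k : DihedralGroup 4) (h : Gam) (hh : h ∈ NB') : f1 k * h * (f1 k)⁻¹ ∈ NB' := by
  induction hh using Subgroup.closure_induction with
  | mem x hx =>
    obtain ⟨l, rfl⟩ := hx
    apply Subgroup.subset_closure
    exact ⟨k * l, by simp only [map_mul, mul_inv_rev, mul_assoc]⟩
  | one => simp
  | mul x y _ _ hx hy =>
    have := mul_mem hx hy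
    convert this using 1
    group
  | inv x _ hx =>
    have := inv_mem hx
    convert this using 1
    group

theorem gam_induction {P : Gam → Prop} (h1 : P 1) (ha : P gA) (hb : P gB) (hc : P gC) (hd : P gD)
    (hm : ∀ x y, P x → P y → P (x * y)) (g : Gam) : P g := by
  obtain ⟨w, rfl⟩ := QuotientGroup.mk_surjective g
  change P (pr w)
  induction w using FreeGroup.induction_on with
  | C1 => exact h1
  | of x => cases x <;> assumption
  | inv_of x _ =>
    rw [map_inv]
    rcases x with _ | _ | _ | _
    · change P gA⁻¹; rwa [Ai]
    · change P gB⁻¹; rwa [Bi]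
    · change P gC⁻¹; rwa [Ci]
    · change P gD⁻¹; rwa [Di]
  | mul x y hx hy => rw [map_mul]; exact hm _ _ hx hy

theorem gB_mem : gB ∈ NB' := Subgroup.subset_closure ⟨1, by simp⟩

theorem NB'_normal : NB'.Normal := by
  constructor
  intro h hh g
  revert h
  have hA : ∀ h ∈ NB', gA * h * gA⁻¹ ∈ NB' := by
    have := NB'_f1 s0; rwa [f1_0] at this
  have hD : ∀ h ∈ NB', gD * h * gD⁻¹ ∈ NB' := by
    have := NB'_f1 s1; rwa [f1_1] at this
  have hB : ∀ h ∈ NB', gB * h * gB⁻¹ ∈ NB' := fun h hh =>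
    mul_mem (mul_mem gB_mem hh) (inv_mem gB_mem)
  have hM : ∀ x y : Gam, (∀ h ∈ NB', x * h * x⁻¹ ∈ NB') → (∀ h ∈ NB', y * h * y⁻¹ ∈ NB') →
      (∀ h ∈ NB', x * y * h * (x * y)⁻¹ ∈ NB') := by
    intro x y hx hy h hh
    have := hx _ (hy h hh)
    convert this using 1
    group
  apply gam_induction (P := fun g => ∀ h ∈ NB', g * h * g⁻¹ ∈ NB') _ hA hB _ hD hM
  · intro h hh; simpa
  · rw [← BD]; exact hM _ _ hB hD

theorem NB_le : NB ≤ NB' := by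
  haveI := NB'_normal
  apply Subgroup.normalClosure_le_normal
  intro x hx
  rw [Set.mem_singleton_iff.1 hx]
  exact gB_mem

theorem commk (k : DihedralGroup 4) : Commute (f k * gD * (f k)⁻¹) (gA * gD * gA) := by
  have h1 : Commute gD (gA * gD * gA) := by
    have h := AD4
    have e : (gA * gD) ^ 4 = ((gA * gD * gA) * gD) * ((gA * gD * gA) * gD) := by simp only [pow_succ, pow_zero, one_mul, mul_assoc]
    rw [e] at h
    have h' := eq_inv_of_mul_eq_one_left h
    unfold Commute SemiconjBy
    rw [h']
    simp only [mul_inv_rev, Ai, Di, mul_assoc]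
  have h2 : Commute (gC * (gA * gC * gA) * gD * (gC * (gA * gC * gA))⁻¹) (gA * gD * gA) := by
    have h := ADACAC4
    have e : (gA * gD * gA * gC * gA * gC) ^ 4 =
      ((gA * gD * gA) * (gC * (gA * gC * gA) * gD * ((gA * gC * gA) * gC))) *
      ((gA * gD * gA) * (gC * (gA * gC * gA) * gD * ((gA * gC * gA) * gC))) := by simp only [pow_succ, pow_zero, one_mul, mul_assoc]
    rw [e] at h
    have h' := eq_inv_of_mul_eq_one_left h
    unfold Commute SemiconjBy
    have e2 : (gC * (gA * gC * gA))⁻¹ = (gA * gC * gA) * gC := by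
      simp only [mul_inv_rev, Ai, Ci, mul_assoc]
    rw [e2, h']
    simp only [mul_inv_rev, Ai, Ci, Di, mul_assoc]
  have P0 : ∀ k, Commute (f k * gD * (f k)⁻¹) (gA * gD * gA) →
      Commute (f (k * s0) * gD * (f (k * s0))⁻¹) (gA * gD * gA) := by
    intro k hk
    have : f (k * s0) * gD * (f (k * s0))⁻¹ = f k * gD * (f k)⁻¹ := by
      simp only [map_mul, f_0, mul_inv_rev, Ci, mul_assoc, CD', BC']
    rwa [this]
  have P1 : ∀ k, Commute (f k * gD * (f k)⁻¹) (gA * gD * gA) →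
      Commute (f (s1 * k) * gD * (f (s1 * k))⁻¹) (gA * gD * gA) := by
    intro k hk
    have e1 : f (s1 * k) * gD * (f (s1 * k))⁻¹ = f s1 * (f k * gD * (f k)⁻¹) * (f s1)⁻¹ := by
      rw [map_mul]; group
    have e2 : gA * gD * gA = f s1 * (gA * gD * gA) * (f s1)⁻¹ := by
      rw [f_1]
      simp only [mul_inv_rev, Ai, Ci, mul_assoc, AA', CD', BC']
    rw [e1, e2]
    exact (Commute.conj_iff (f s1)).2 hk
  have Q1 : Commute (f 1 * gD * (f 1)⁻¹) (gA * gD * gA) := by simpa using h1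
  have Q2 : Commute (f (s0 * s1) * gD * (f (s0 * s1))⁻¹) (gA * gD * gA) := by
    rw [map_mul, f_0, f_1]; exact h2
  rcases d_list k with h | h | h | h | h | h | h | h <;> subst h
  · exact Q1
  · simpa only [mul_one] using P1 _ Q1
  · simpa only [one_mul] using P0 _ Q1
  · have := P1 _ (P0 _ Q1)
    simpa only [one_mul] using this
  · exact Q2
  · exact P1 _ Q2
  · rw [← mul_assoc]; exact P0 _ Q2
  · have := P1 _ (P0 _ Q2)
    rwa [mul_assoc] at this

theorem f2_surj (k : DihedralGroup 4) : ∃ m, f1 k = f2 m := by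
  rcases d_list k with h | h | h | h | h | h | h | h <;> subst h
  · exact ⟨1, by simp only [map_one]⟩
  · exact ⟨s0, by simp only [f1_1, f2_0]⟩
  · exact ⟨s1, by simp only [f1_0, f2_1]⟩
  · exact ⟨s0 * s1, by simp only [map_mul, f1_0, f1_1, f2_0, f2_1]⟩
  · exact ⟨s1 * s0, by simp only [map_mul, f1_0, f1_1, f2_0, f2_1]⟩
  · exact ⟨s0 * (s1 * s0), by simp only [map_mul, f1_0, f1_1, f2_0, f2_1]⟩
  · exact ⟨s1 * (s0 * s1), by simp only [map_mul, f1_0, f1_1, f2_0, f2_1]⟩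
  · exact ⟨s0 * (s1 * (s0 * s1)), by simp only [map_mul, f1_0, f1_1, f2_0, f2_1]⟩

theorem commST (x y : Gam) (hx : x ∈ NB) (hy : y ∈ NB) : Commute (S x) (T y) := by
  replace hx := NB_le hx
  replace hy := NB_le hy
  induction hx using Subgroup.closure_induction with
  | one => simp
  | mul x x' _ _ h h' => rw [map_mul]; exact h.mul_left h'
  | inv x _ h => rw [map_inv]; exact h.inv_left
  | mem x hx =>
    induction hy using Subgroup.closure_induction with
    | one => simp
    | mul y y' _ _ h h' => rw [map_mul]; exact h.mul_right h'
    | inv y _ h => rw [map_inv]; exact h.inv_right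
    | mem y hy =>
      obtain ⟨k, rfl⟩ := hx
      obtain ⟨l, rfl⟩ := hy
      obtain ⟨m, hm⟩ := f2_surj k
      have hS : S (f1 k * gB * (f1 k)⁻¹) = f m * gD * (f m)⁻¹ := by
        rw [hm, map_mul, map_mul, map_inv, S_B, f_S]
      have hT : T (f1 l * gB * (f1 l)⁻¹) = f l * (gA * gD * gA) * (f l)⁻¹ := by
        rw [map_mul, map_mul, map_inv, T_B, f_T]
      have hS' : f m * gD * (f m)⁻¹ = f l * (f (l⁻¹ * m) * gD * (f (l⁻¹ * m))⁻¹) * (f l)⁻¹ := by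
        simp only [map_mul, map_inv]; group
      rw [hS, hT, hS']
      exact (Commute.conj_iff (f l)).2 (commk _)

def MM (h : Gam) : Prop := ∃ x ∈ NB, ∃ y ∈ NB, ∃ k, h = S x * T y * f k

theorem MM_mul (h h' : Gam) (H : MM h) (H' : MM h') : MM (h * h') := by
  obtain ⟨x, hx, y, hy, k, rfl⟩ := H
  obtain ⟨x', hx', y', hy', k', rfl⟩ := H'
  have hn : NB.Normal := inferInstance
  refine ⟨x * (f2 k * x' * (f2 k)⁻¹), mul_mem hx (hn.conj_mem _ hx' _),
    y * (f1 k * y' * (f1 k)⁻¹), mul_mem hy (hn.conj_mem _ hy' _), k * k', ?_⟩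
  have hc := commST _ y (hn.conj_mem _ hx' (f2 k)) hy
  simp only [map_mul, map_inv, ← f_S, ← f_T] at hc ⊢
  calc S x * T y * f k * (S x' * T y' * f k') =
      S x * (T y * (f k * S x' * (f k)⁻¹)) * (f k * T y' * (f k)⁻¹) * (f k * f k') := by group
    _ = _ := by rw [← hc.eq]; group

theorem MM_one : MM 1 := ⟨1, one_mem _, 1, one_mem _, 1, by simp⟩
theorem gB_NB : gB ∈ NB := Subgroup.subset_normalClosure rfl
theorem MM_D : MM gD := ⟨gB, gB_NB, 1, one_mem _, 1, by simp [S_B]⟩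
theorem MM_ADA : MM (gA * gD * gA) := ⟨1, one_mem _, gB, gB_NB, 1, by simp [T_B]⟩
theorem MM_C : MM gC := ⟨1, one_mem _, 1, one_mem _, s0, by rw [f_0]; simp⟩
theorem MM_ACA : MM (gA * gC * gA) := ⟨1, one_mem _, 1, one_mem _, s1, by rw [f_1]; simp⟩
theorem MM_B : MM gB := by rw [← DC]; exact MM_mul _ _ MM_D MM_C
theorem MM_ABA : MM (gA * gB * gA) := by
  have : gA * gB * gA = (gA * gD * gA) * (gA * gC * gA) := by
    simp only [mul_assoc, AA', DC']
  rw [this]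
  exact MM_mul _ _ MM_ADA MM_ACA

theorem MM_of (x : E7) : MM (pr (iota (FreeGroup.of x))) ∧
    (pr (iota (FreeGroup.of x)))⁻¹ = pr (iota (FreeGroup.of x)) := by
  rcases x with _ | _ | _ | _ | _ | _ | _ <;> simp only [iota, FreeGroup.lift_apply_of, map_mul, map_pow]
  · exact ⟨MM_B, Bi⟩
  · exact ⟨MM_C, Ci⟩
  · exact ⟨MM_D, Di⟩
  · change MM (gA * gB * gA) ∧ (gA * gB * gA)⁻¹ = gA * gB * gA
    exact ⟨MM_ABA, by simp only [mul_inv_rev, Ai, Bi, mul_assoc]⟩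
  · change MM (gA * gC * gA) ∧ (gA * gC * gA)⁻¹ = gA * gC * gA
    exact ⟨MM_ACA, by simp only [mul_inv_rev, Ai, Ci, mul_assoc]⟩
  · change MM (gA * gD * gA) ∧ (gA * gD * gA)⁻¹ = gA * gD * gA
    exact ⟨MM_ADA, by simp only [mul_inv_rev, Ai, Di, mul_assoc]⟩
  · change MM (gA ^ 2) ∧ (gA ^ 2)⁻¹ = gA ^ 2
    rw [pow_two, AA]
    exact ⟨MM_one, inv_one⟩

theorem MM_iota (e : FreeGroup E7) : MM (pr (iota e)) := by
  induction e using FreeGroup.induction_on with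
  | C1 => rw [map_one, map_one]; exact MM_one
  | of x => exact (MM_of x).1
  | inv_of x _ => rw [map_inv, map_inv, (MM_of x).2]; exact (MM_of x).1
  | mul x y hx hy => rw [map_mul, map_mul]; exact MM_mul _ _ hx hy

theorem q_NB (x : Gam) (hx : x ∈ NB) : q x = 1 := by
  have : NB ≤ q.ker := by
    apply Subgroup.normalClosure_le_normal
    intro y hy
    rw [Set.mem_singleton_iff.1 hy]
    exact q_B
  exact this hx

theorem MM_inj (h : Gam) (H : MM h) (h1 : Phi h = 1) : h = 1 := by
  obtain ⟨x, hx, y, hy, k, rfl⟩ := H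
  rw [f_T, map_mul, map_mul, Phi_S, Phi_T, Phi_T, q_f1, q_NB x hx, q_NB y hy, map_one, ← map_mul,
    ← map_mul] at h1
  have h2 := jj_inj h1
  simp only [Prod.mk_mul_mk, one_mul, mul_one, Prod.mk_eq_one] at h2
  obtain ⟨h3, h4⟩ := h2
  have hk : k = 1 := by
    have := congrArg q h3
    rwa [map_mul, q_NB y hy, q_f1, one_mul, map_one] at this
  subst hk
  rw [map_one, mul_one] at h3 h4
  rw [h3, h4]; simp

/-- for `h ∈ H(0)`, `ψ₀(h) ∈ N(∞) × N(∞)` if and only if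
`h ∈ N(∞)`; i.e. the induced map `ψ_∞ : H(∞) → Γ × Γ` is injective. -/
theorem ker_psi_infty :
    ∀ e : FreeGroup E7,
      psi e ∈ (Subgroup.normalClosure Rinf).prod (Subgroup.normalClosure Rinf) ↔
        iota e ∈ Subgroup.normalClosure Rinf := by
  intro e
  rw [Subgroup.mem_prod, ← pr_eq_one, ← pr_eq_one, ← pr_eq_one]
  have h := Phi_iota e
  constructor
  · rintro ⟨h1, h2⟩
    apply MM_inj _ (MM_iota e)
    rw [h, h1, h2]
    exact map_one _
  · intro h1
    rw [h1, map_one] at h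
    exact Prod.mk_eq_one.1 (jj_inj h.symm)
end

section
/- For every integer i ≥ 1: σ^i(a²) is a positive word (a product of the letters a, b, c, d with no inverses) of length 2^{i+2} − 2, and σ^i(a²) can be written as a product of 2^{i+1} − 1 conjugates of elements of {a², b², c², d²}. In particular, σ^i(a²) ∈ N(1) for all i ≥ 1, and the normal closure of R*(∞) = R(∞) ∪ {σ^i(a²) : i ≥ 1} in F equals the normal closure N(∞) of R(∞). -/
/-- `W` is a product of `L` conjugates of elements of `R ∪ R⁻¹`. -/
def IsProdConjPM {G : Type*} [Group G] (R : Set G) (L : ℕ) (W : G) : Prop :=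
  ∃ f : Fin L → G,
    (∀ j, ∃ x r, r ∈ R ∧ (f j = x * r * x⁻¹ ∨ f j = x * r⁻¹ * x⁻¹)) ∧
    W = (List.ofFn f).prod

/-- The extended relator set `R*(∞) = R(∞) ∪ {σⁱ(a²) : i ≥ 1}`. -/
def RinfStar : Set F4 :=
  Rinf ∪ {w | ∃ i : ℕ, 1 ≤ i ∧ w = (⇑sigma)^[i] (ga ^ 2)}

/-- `N(1)`, the normal closure of `{a², b², c², d², bcd, (ad)⁴}` in `F`. -/
def N1 : Subgroup F4 :=
  Subgroup.normalClosure
    {ga ^ 2, gb ^ 2, gc ^ 2, gd ^ 2, gb * gc * gd, (ga * gd) ^ 4}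

theorem sg_map_mul (i : ℕ) (x y : F4) :
    (⇑sigma)^[i] (x * y) = (⇑sigma)^[i] x * (⇑sigma)^[i] y := by
  induction i generalizing x y with
  | zero => rfl
  | succ n ih => simp only [Function.iterate_succ_apply, map_mul, ih]

theorem sg_c (i : ℕ) : ∃ y : L4, y ≠ L4.a ∧ (⇑sigma)^[i] gc = FreeGroup.of y := by
  induction i with
  | zero => exact ⟨L4.c, by decide, rfl⟩
  | succ n ih =>
    obtain ⟨y, hy, h⟩ := ih
    rw [Function.iterate_succ_apply', h]
    cases y with
    | a => exact absurd rfl hy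
    | b => exact ⟨L4.d, by decide, by simp [sigma, gd]⟩
    | c => exact ⟨L4.b, by decide, by simp [sigma, gb]⟩
    | d => exact ⟨L4.c, by decide, by simp [sigma, gc]⟩

theorem sg_a_succ (i : ℕ) :
    (⇑sigma)^[i + 1] ga = (⇑sigma)^[i] ga * (⇑sigma)^[i] gc * (⇑sigma)^[i] ga := by
  have h : sigma ga = ga * gc * ga := by
    conv_lhs => simp [sigma, ga]
    rfl
  rw [Function.iterate_succ_apply, h, sg_map_mul, sg_map_mul]

theorem sg_a_pos (i : ℕ) : ∃ l : List L4, (⇑sigma)^[i] ga = (l.map FreeGroup.of).prod ∧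
    l.length + 1 = 2 ^ (i + 1) := by
  induction i with
  | zero => exact ⟨[L4.a], by simp [ga], by simp⟩
  | succ n ih =>
    obtain ⟨l, h, hl⟩ := ih
    obtain ⟨y, -, hy⟩ := sg_c n
    refine ⟨l ++ y :: l, ?_, ?_⟩
    · rw [sg_a_succ, h, hy]; simp [mul_assoc]
    · rw [pow_succ, ← hl]; simp; omega

/-- conjugates of squares of letters -/
def SqConj (g : F4) : Prop :=
  ∃ x r, r ∈ ({ga ^ 2, gb ^ 2, gc ^ 2, gd ^ 2} : Set F4) ∧ g = x * r * x⁻¹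

theorem SqConj.conj {g : F4} (h : SqConj g) (z : F4) : SqConj (MulAut.conj z g) := by
  obtain ⟨x, r, hr, rfl⟩ := h
  exact ⟨z * x, r, hr, by simp [mul_assoc]⟩

theorem sq_mem (y : L4) :
    (FreeGroup.of y) ^ 2 ∈ ({ga ^ 2, gb ^ 2, gc ^ 2, gd ^ 2} : Set F4) := by
  cases y <;> simp [ga, gb, gc, gd]

theorem sg_sq (i : ℕ) : ∃ l : List F4, (∀ g ∈ l, SqConj g) ∧
    (⇑sigma)^[i] (ga ^ 2) = l.prod ∧ l.length + 1 = 2 ^ (i + 1) := by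
  induction i with
  | zero => exact ⟨[ga ^ 2], by
      intro g hg
      rw [List.mem_singleton] at hg
      exact ⟨1, ga ^ 2, by simp, by simp [hg]⟩, by simp, by simp⟩
  | succ n ih =>
    obtain ⟨l, h, hp, hl⟩ := ih
    obtain ⟨y, -, hy⟩ := sg_c n
    set P := (⇑sigma)^[n] ga with hP
    rw [pow_two, sg_map_mul, ← hP] at hp
    refine ⟨l.map (MulAut.conj (P * FreeGroup.of y)) ++
      (P * (FreeGroup.of y) ^ 2 * P⁻¹) :: l, ?_, ?_, ?_⟩
    · intro g hg
      rw [List.mem_append, List.mem_cons, List.mem_map] at hg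
      rcases hg with ⟨g', hg', rfl⟩ | rfl | hg
      · exact (h g' hg').conj _
      · exact ⟨P, _, sq_mem y, rfl⟩
      · exact h g hg
    · rw [pow_two, sg_map_mul, sg_a_succ, hy, ← hP, List.prod_append, List.prod_cons,
        ← map_list_prod, ← hp, MulAut.conj_apply]
      group
    · rw [pow_succ 2 (n + 1), ← hl]; simp; omega

theorem sg_mem (N : Subgroup F4) [N.Normal]
    (hN : ({ga ^ 2, gb ^ 2, gc ^ 2, gd ^ 2} : Set F4) ⊆ N) (i : ℕ) :
    (⇑sigma)^[i] (ga ^ 2) ∈ N := by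
  obtain ⟨l, h, hp, -⟩ := sg_sq i
  rw [hp]
  refine Subgroup.list_prod_mem _ fun g hg => ?_
  obtain ⟨x, r, hr, rfl⟩ := h g hg
  exact Subgroup.Normal.conj_mem inferInstance r (hN hr) x

/-- for every `i ≥ 1`, `σⁱ(a²)` is a positive word of length
`2^{i+2} − 2` and is a product of `2^{i+1} − 1` conjugates of elements of
`{a², b², c², d²}`; in particular `σⁱ(a²) ∈ N(1)` and the normal closure of
`R*(∞)` equals that of `R(∞)`. -/
theorem sigma_iterate_a_squared :
    (∀ i : ℕ, 1 ≤ i →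
      (∃ l : List L4, (⇑sigma)^[i] (ga ^ 2) = (l.map FreeGroup.of).prod ∧
          l.length = 2 ^ (i + 2) - 2) ∧
      (∃ f : Fin (2 ^ (i + 1) - 1) → F4,
        (∀ j, ∃ x r, r ∈ ({ga ^ 2, gb ^ 2, gc ^ 2, gd ^ 2} : Set F4) ∧
            f j = x * r * x⁻¹) ∧
        (⇑sigma)^[i] (ga ^ 2) = (List.ofFn f).prod) ∧
      (⇑sigma)^[i] (ga ^ 2) ∈ N1) ∧
    Subgroup.normalClosure RinfStar = Subgroup.normalClosure Rinf := by
  refine ⟨fun i hi => ⟨?_, ?_, ?_⟩, ?_⟩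
  · obtain ⟨l, h, hl⟩ := sg_a_pos i
    refine ⟨l ++ l, ?_, ?_⟩
    · rw [pow_two, sg_map_mul, h]; simp
    · rw [List.length_append, pow_succ, ← hl]; omega
  · obtain ⟨l, h, hp, hl⟩ := sg_sq i
    have hn : 2 ^ (i + 1) - 1 = l.length := by omega
    rw [hn]
    exact ⟨l.get, fun j => h _ (l.get_mem j), by rw [hp, List.ofFn_get]⟩
  · have : N1.Normal := Subgroup.normalClosure_normal
    refine sg_mem N1 (fun x hx => Subgroup.subset_normalClosure ?_) i
    simp only [Set.mem_insert_iff, Set.mem_singleton_iff] at hx ⊢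
    tauto
  · apply le_antisymm
    · refine Subgroup.normalClosure_le_normal ?_
      rintro w (hw | ⟨i, -, rfl⟩)
      · exact Subgroup.subset_normalClosure hw
      · refine sg_mem (Subgroup.normalClosure Rinf)
          (fun x hx => Subgroup.subset_normalClosure (s := Rinf) ?_) i
        refine Or.inl (Or.inl ?_)
        simp only [Set.mem_insert_iff, Set.mem_singleton_iff] at hx ⊢
        tauto
    · exact Subgroup.normalClosure_mono Set.subset_union_left
end

section
/- For every element W of the free group F with basis {a, b, c, d}, there exist elements U and Z of F such that: U is represented by a positive word (a product of the letters a, b, c, d with no inverses) of length at most |W|, no cyclic permutation of which contains a subword equal to aa or equal to g₁g₂ with g₁, g₂ ∈ {b, c, d}; and W·(Z U Z⁻¹)⁻¹ can be written as a product of at most 3·|W| conjugates of elements of {a², b², c², d², bcd} and their inverses. -/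
abbrev R5 : Set F4 := {ga ^ 2, gb ^ 2, gc ^ 2, gd ^ 2, gb * gc * gd}

def DD_s14 (n : ℕ) (W : F4) : Prop := ∃ L : ℕ, L ≤ n ∧ IsProdConjPM R5 L W

abbrev BadP (g₁ g₂ : L4) : Prop := (g₁ = L4.a ∧ g₂ = L4.a) ∨
          (g₁ ∈ ({L4.b, L4.c, L4.d} : Set L4) ∧
           g₂ ∈ ({L4.b, L4.c, L4.d} : Set L4))

lemma DD_mono {n m : ℕ} {W : F4} (h : DD_s14 n W) (hnm : n ≤ m) : DD_s14 m W := by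
  obtain ⟨L, hL, h⟩ := h
  exact ⟨L, hL.trans hnm, h⟩

lemma DD_one (n : ℕ) : DD_s14 n 1 := by
  refine ⟨0, Nat.zero_le _, fun i => i.elim0, fun i => i.elim0, ?_⟩
  simp

lemma DD_mul {n m : ℕ} {V W : F4} (hV : DD_s14 n V) (hW : DD_s14 m W) : DD_s14 (n + m) (V * W) := by
  obtain ⟨L, hL, f, hf, rfl⟩ := hV
  obtain ⟨M, hM, g, hg, rfl⟩ := hW
  refine ⟨L + M, by omega, Fin.append f g, ?_, ?_⟩
  · intro j
    refine Fin.addCases (fun i => ?_) (fun i => ?_) j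
    · rw [Fin.append_left]; exact hf i
    · rw [Fin.append_right]; exact hg i
  · rw [List.ofFn_fin_append, List.prod_append]

lemma DD_conj {n : ℕ} {W : F4} (x : F4) (hW : DD_s14 n W) : DD_s14 n (x * W * x⁻¹) := by
  obtain ⟨L, hL, f, hf, rfl⟩ := hW
  refine ⟨L, hL, fun j => x * f j * x⁻¹, ?_, ?_⟩
  · intro j
    obtain ⟨y, r, hr, h⟩ := hf j
    refine ⟨x * y, r, hr, ?_⟩
    rcases h with h | h
    · left; simp only [h]; group
    · right; simp only [h]; group
  · have := map_list_prod (MulAut.conj x) (List.ofFn f)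
    rw [MulAut.conj_apply] at this
    rw [this, List.map_ofFn]
    rfl

lemma DD_rel {r : F4} (x : F4) (hr : r ∈ R5) : DD_s14 1 (x * r * x⁻¹) :=
  ⟨1, le_rfl, fun _ => x * r * x⁻¹, fun _ => ⟨x, r, hr, Or.inl rfl⟩, by simp⟩

lemma DD_rel' {r : F4} (x : F4) (hr : r ∈ R5) : DD_s14 1 (x * r⁻¹ * x⁻¹) :=
  ⟨1, le_rfl, fun _ => x * r⁻¹ * x⁻¹, fun _ => ⟨x, r, hr, Or.inr rfl⟩, by simp⟩

def ltr (x : L4) (e : Bool) : F4 := FreeGroup.mk [(x, e)]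

lemma ltr_true (x : L4) : ltr x true = FreeGroup.of x := rfl

lemma ltr_false (x : L4) : ltr x false = (FreeGroup.of x)⁻¹ := rfl

lemma sq_mem_s14 (x : L4) : (FreeGroup.of x) ^ 2 ∈ R5 := by
  cases x <;> simp [R5, ga, gb, gc, gd]

lemma DD_sq (x : L4) : DD_s14 1 ((FreeGroup.of x) ^ 2) := by
  simpa using DD_rel 1 (sq_mem_s14 x)

lemma DD_sq' (x : L4) : DD_s14 1 (((FreeGroup.of x) ^ 2)⁻¹) := by
  simpa using DD_rel' 1 (sq_mem_s14 x)

lemma ltr_mul (x : L4) (e f : Bool) : DD_s14 1 (ltr x e * ltr x f) := by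
  cases e <;> cases f <;> simp only [ltr_true, ltr_false]
  · convert DD_sq' x using 1; group
  · convert DD_one 1 using 1; group
  · convert DD_one 1 using 1; group
  · convert DD_sq x using 1; rw [pow_two]

lemma ltr_inv (x : L4) (e : Bool) : (ltr x e)⁻¹ = ltr x (!e) := by
  cases e <;> simp [ltr_true, ltr_false]

lemma ltr_flip (x : L4) (e f : Bool) : DD_s14 1 (ltr x e * (ltr x f)⁻¹) := by
  rw [ltr_inv]; exact ltr_mul _ _ _

lemma merge_of {x y : L4} {q : F4} (e f e₀ f₀ : Bool)
    (h : DD_s14 1 (ltr x e₀ * ltr y f₀ * q⁻¹)) : DD_s14 3 (ltr x e * ltr y f * q⁻¹) := by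
  have := DD_mul (DD_mul (DD_conj (ltr x e) (ltr_flip y f f₀)) (ltr_flip x e e₀)) h
  convert this using 1
  group

lemma bcd_mem : gb * gc * gd ∈ R5 := by simp [R5]

lemma merge (x y : L4) (h : BadP x y) (e f : Bool) :
    ∃ q : List (L4 × Bool), q.length ≤ 1 ∧ DD_s14 3 (ltr x e * ltr y f * (FreeGroup.mk q)⁻¹) := by
  by_cases hxy : x = y
  · subst hxy
    refine ⟨[], by simp, ?_⟩
    have := DD_mono (ltr_mul x e f) (show 1 ≤ 3 by norm_num)
    simpa [← FreeGroup.one_eq_mk] using this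
  · have hm := bcd_mem
    have key : ∃ (z : L4) (e₀ f₀ g : Bool), DD_s14 1 (ltr x e₀ * ltr y f₀ * (ltr z g)⁻¹) := by
      cases x <;> cases y <;> simp [BadP] at h hxy
      · refine ⟨L4.d, true, true, false, ?_⟩
        convert DD_rel 1 hm using 1
        simp only [ltr_true, ltr_false, gb, gc, gd]; group
      · refine ⟨L4.c, false, false, true, ?_⟩
        convert DD_rel' gb⁻¹ hm using 1
        simp only [ltr_true, ltr_false, gb, gc, gd]; group
      · refine ⟨L4.d, false, false, true, ?_⟩
        convert DD_rel' gd hm using 1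
        simp only [ltr_true, ltr_false, gb, gc, gd]; group
      · refine ⟨L4.b, true, true, false, ?_⟩
        convert DD_rel gb⁻¹ hm using 1
        simp only [ltr_true, ltr_false, gb, gc, gd]; group
      · refine ⟨L4.c, true, true, false, ?_⟩
        convert DD_rel gd hm using 1
        simp only [ltr_true, ltr_false, gb, gc, gd]; group
      · refine ⟨L4.b, false, false, true, ?_⟩
        convert DD_rel' 1 hm using 1
        simp only [ltr_true, ltr_false, gb, gc, gd]; group
    obtain ⟨z, e₀, f₀, g, h1⟩ := key
    exact ⟨[(z, g)], by simp, merge_of e f e₀ f₀ h1⟩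

lemma mk_cons (p : L4 × Bool) (w : List (L4 × Bool)) :
    FreeGroup.mk (p :: w) = ltr p.1 p.2 * FreeGroup.mk w := by
  rw [ltr, FreeGroup.mul_mk]; rfl

lemma positive (w : List (L4 × Bool)) :
    DD_s14 w.length (FreeGroup.mk w * (((w.map Prod.fst).map FreeGroup.of).prod)⁻¹) := by
  induction w with
  | nil => simpa [← FreeGroup.one_eq_mk] using DD_one 0
  | cons p w ih =>
    rw [mk_cons, List.length_cons]
    have := DD_mul (DD_conj (ltr p.1 p.2) ih) (ltr_flip p.1 p.2 true)
    convert this using 1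
    simp only [List.map_cons, List.prod_cons, ltr_true]
    group

lemma mk_rotate (w : List (L4 × Bool)) (k : ℕ) :
    ∃ Z : F4, FreeGroup.mk w = Z * FreeGroup.mk (w.rotate k) * Z⁻¹ := by
  induction k generalizing w with
  | zero => exact ⟨1, by simp⟩
  | succ k ih =>
    cases w with
    | nil => exact ⟨1, by simp⟩
    | cons p w =>
      obtain ⟨Z, hZ⟩ := ih (w ++ [p])
      refine ⟨ltr p.1 p.2 * Z, ?_⟩
      rw [List.rotate_cons_succ]
      have : FreeGroup.mk (w ++ [p]) = FreeGroup.mk w * ltr p.1 p.2 := by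
        rw [ltr, FreeGroup.mul_mk]
      rw [this] at hZ
      rw [mk_cons, eq_mul_inv_of_mul_eq hZ]
      group

lemma main_aux (n : ℕ) : ∀ w : List (L4 × Bool), w.length = n → ∃ (Z : F4) (l : List L4),
      l.length ≤ n ∧
      (∀ k : ℕ, ∀ g₁ g₂ : L4, [g₁, g₂] <:+: l.rotate k → ¬ BadP g₁ g₂) ∧
      DD_s14 (3 * n) (FreeGroup.mk w * (Z * (l.map FreeGroup.of).prod * Z⁻¹)⁻¹) := by
  induction n using Nat.strong_induction_on with
  | _ n ih =>
  intro w hw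
  by_cases hgood : ∀ k : ℕ, ∀ g₁ g₂ : L4,
      [g₁, g₂] <:+: (w.map Prod.fst).rotate k → ¬ BadP g₁ g₂
  · refine ⟨1, w.map Prod.fst, by simp [hw], hgood, ?_⟩
    have := DD_mono (positive w) (show w.length ≤ 3 * n by omega)
    simpa using this
  · push Not at hgood
    obtain ⟨k, x, y, ⟨s, t, hst⟩, hbad⟩ := hgood
    rw [← List.map_rotate] at hst
    obtain ⟨st, t', hw1, hst', rfl⟩ := List.map_eq_append_iff.1 hst.symm
    obtain ⟨s', xy, rfl, rfl, hxy⟩ := List.map_eq_append_iff.1 hst'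
    obtain ⟨⟨x, e⟩, xy', rfl, rfl, hxy2⟩ := List.map_eq_cons_iff.1 hxy
    obtain ⟨⟨y, f⟩, xy'', rfl, rfl, hxy3⟩ := List.map_eq_cons_iff.1 hxy2
    obtain rfl := List.map_eq_nil_iff.1 hxy3
    obtain ⟨q, hq, hD⟩ := merge x y hbad e f
    have hlen := congrArg List.length hw1
    simp at hlen
    obtain ⟨Y, l, hl, hgood, hDl⟩ := ih (s' ++ q ++ t').length (by simp; omega) (s' ++ q ++ t') rfl
    obtain ⟨Z, hZ⟩ := mk_rotate w k
    refine ⟨Z * Y, l, by simp at hl; omega, hgood, ?_⟩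
    have h1 := DD_conj Z (DD_mul (DD_conj (FreeGroup.mk s') hD) hDl)
    refine DD_mono (n := 3 + 3 * (s' ++ q ++ t').length) ?_ (by simp; omega)
    convert h1 using 1
    rw [hZ, hw1]
    simp only [← FreeGroup.mul_mk, mk_cons, ← FreeGroup.one_eq_mk]
    group

/-- every `W ∈ F(a,b,c,d)` can be transformed, by at most `3|W|`
applications of the relators `a², b², c², d², bcd`, into (a conjugate of) a
positive word `U` of length at most `|W|` no cyclic permutation of which
contains a subword `aa` or `g₁g₂` with `g₁, g₂ ∈ {b, c, d}`. -/
theorem reduction_to_positive_word :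
    ∀ W : F4, ∃ (U Z : F4) (l : List L4),
      U = (l.map FreeGroup.of).prod ∧
      l.length ≤ FreeGroup.norm W ∧
      (∀ k : ℕ, ∀ g₁ g₂ : L4, [g₁, g₂] <:+: l.rotate k →
        ¬((g₁ = L4.a ∧ g₂ = L4.a) ∨
          (g₁ ∈ ({L4.b, L4.c, L4.d} : Set L4) ∧
           g₂ ∈ ({L4.b, L4.c, L4.d} : Set L4)))) ∧
      ∃ L : ℕ, L ≤ 3 * FreeGroup.norm W ∧
        IsProdConjPM ({ga ^ 2, gb ^ 2, gc ^ 2, gd ^ 2, gb * gc * gd} : Set F4)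
          L (W * (Z * U * Z⁻¹)⁻¹) := by
  intro W
  obtain ⟨Z, l, hl, hg, hD⟩ := main_aux W.toWord.length W.toWord rfl
  rw [FreeGroup.mk_toWord] at hD
  exact ⟨_, Z, l, rfl, hl, hg, hD⟩
end

section
/- Let A₀ be a finite alphabet, R₀ a finite set of nonempty cyclically reduced words of the free group F(A₀), t a letter not in A₀, A = A₀ ∪ {t}, and π_t : F(A) → F(A₀) the homomorphism fixing each letter of A₀ and sending t to 1. Let N_t be the set of all nonempty cyclically reduced elements of the kernel of π_t, and let V_t be the set of all words X₁ t R₁ t X₁⁻¹ t X₂ t R₂ t X₂⁻¹ t ⋯ X_k t R_k t X_k⁻¹ t with k ≥ 1, R_i ∈ R₀ ∪ R₀⁻¹, and X_i reduced words of F(A₀). Then a word W ∈ F(A) belongs to the normal closure of N_t ∪ V_t in F(A) if and only if π_t(W) belongs to the normal closure of R₀ in F(A₀). -/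
/-- An element of a free group is cyclically reduced if its reduced word is
cyclically reduced: whenever the reduced word starts with the letter `x` and
ends with the letter `y` with `x.1 = y.1`, then `x.2 = y.2` (the first letter
is not the inverse of the last one). -/
def IsCyclicallyReduced {β : Type} [DecidableEq β] (w : FreeGroup β) : Prop :=
  ∀ (x y : β × Bool) (l : List (β × Bool)),
    w.toWord = x :: (l ++ [y]) → x.1 = y.1 → x.2 = y.2

section

variable {α : Type} [DecidableEq α]

/-- The new letter `t` adjoined to the alphabet `A₀` (`t = none`). -/
def tt : FreeGroup (Option α) := FreeGroup.of none

/-- The retraction `π_t : F(A) → F(A₀)` fixing each letter of `A₀` and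
sending `t` to `1`. -/
def pit : FreeGroup (Option α) →* FreeGroup α :=
  FreeGroup.lift fun x => x.elim 1 FreeGroup.of

/-- The inclusion `F(A₀) → F(A)`. -/
def iot : FreeGroup α →* FreeGroup (Option α) :=
  FreeGroup.map some

/-- `N_t`: the set of all nonempty cyclically reduced elements of the kernel
of `π_t` (equivalently, of the normal closure of `t` in `F(A)`). -/
def Nt : Set (FreeGroup (Option α)) :=
  {w | w ≠ 1 ∧ IsCyclicallyReduced w ∧ w ∈ pit.ker}

/-- `V_t`: the set of all words
`X₁ t R₁ t X₁⁻¹ t X₂ t R₂ t X₂⁻¹ t ⋯ X_k t R_k t X_k⁻¹ t` with `k ≥ 1`,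
`R_i ∈ R₀ ∪ R₀⁻¹` and `X_i ∈ F(A₀)`. -/
def Vt (R₀ : Set (FreeGroup α)) : Set (FreeGroup (Option α)) :=
  {w | ∃ k : ℕ, 0 < k ∧ ∃ R X : Fin k → FreeGroup α,
    (∀ i, R i ∈ R₀ ∪ R₀⁻¹) ∧
    w = (List.ofFn fun i =>
          iot (X i) * tt * iot (R i) * tt * (iot (X i))⁻¹ * tt).prod}

end

/-- a word `W ∈ F(A)` lies in the normal closure of `N_t ∪ V_t`
if and only if `π_t(W)` lies in the normal closure of `R₀` in `F(A₀)`. -/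
theorem referee_presentation_word_problem {α : Type} [DecidableEq α] [Fintype α]
    (R₀ : Set (FreeGroup α)) (hfin : R₀.Finite)
    (hR₀ : ∀ r ∈ R₀, r ≠ 1 ∧ IsCyclicallyReduced r) :
    ∀ W : FreeGroup (Option α),
      W ∈ Subgroup.normalClosure (Nt ∪ Vt R₀) ↔
        pit W ∈ Subgroup.normalClosure R₀ := by
  intro W
  have ht : (tt : FreeGroup (Option α)) ∈ Subgroup.normalClosure (Nt ∪ Vt R₀) := by
    apply Subgroup.subset_normalClosure
    left
    refine ⟨FreeGroup.of_ne_one _, ?_, ?_⟩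
    · intro x y l h
      have := congrArg List.length h
      simp [tt, FreeGroup.toWord_of] at this
    · simp [MonoidHom.mem_ker, tt, pit]
  have hpi : ∀ x : FreeGroup α, pit (iot x) = x := by
    intro x
    have : (pit.comp iot : FreeGroup α →* FreeGroup α) = MonoidHom.id _ := by
      ext a
      simp [pit, iot]
    exact DFunLike.congr_fun this x
  have hpt : pit (tt : FreeGroup (Option α)) = 1 := by simp [tt, pit]
  constructor
  · intro h
    have hle : Subgroup.normalClosure (Nt ∪ Vt R₀) ≤
        (Subgroup.normalClosure R₀).comap pit := by
      apply Subgroup.normalClosure_le_normal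
      rintro w (hw | ⟨k, -, R, X, hR, rfl⟩)
      · have h1 : pit w = 1 := hw.2.2
        simp only [SetLike.mem_coe, Subgroup.mem_comap, h1]
        exact one_mem _
      · apply Subgroup.list_prod_mem
        intro x hx
        obtain ⟨i, rfl⟩ := (List.mem_ofFn' _ _).1 hx
        simp only [Subgroup.mem_comap, map_mul, map_inv, hpi, hpt, mul_one]
        apply Subgroup.normalClosure_normal.conj_mem
        rcases hR i with h | h
        · exact Subgroup.subset_normalClosure h
        · exact inv_mem_iff.1 (Subgroup.subset_normalClosure h)
    exact hle h
  · intro h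
    have hle : Subgroup.normalClosure R₀ ≤
        (Subgroup.normalClosure (Nt ∪ Vt R₀)).comap iot := by
      apply Subgroup.normalClosure_le_normal
      intro r hr
      have hv : tt * iot r * tt * tt ∈ Subgroup.normalClosure (Nt ∪ Vt R₀) := by
        apply Subgroup.subset_normalClosure
        right
        exact ⟨1, one_pos, fun _ => r, fun _ => 1, fun _ => Or.inl hr, by simp⟩
      rw [Subgroup.mul_mem_cancel_right _ ht, Subgroup.mul_mem_cancel_right _ ht,
        Subgroup.mul_mem_cancel_left _ ht] at hv
      exact hv
    have h2 : iot (pit W) ∈ Subgroup.normalClosure (Nt ∪ Vt R₀) := hle h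
    have h3 : (QuotientGroup.mk' (Subgroup.normalClosure (Nt ∪ Vt R₀))).comp (iot.comp pit)
        = QuotientGroup.mk' (Subgroup.normalClosure (Nt ∪ Vt R₀)) := by
      ext a
      cases a with
      | none =>
        have := (QuotientGroup.eq_one_iff _).2 ht
        simp only [tt] at this
        simp [pit, this]
      | some a => simp [pit, iot]
    have h4 := DFunLike.congr_fun h3 W
    simp only [MonoidHom.comp_apply, QuotientGroup.mk'_apply] at h4
    rw [(QuotientGroup.eq_one_iff _).2 h2] at h4
    exact (QuotientGroup.eq_one_iff _).1 h4.symm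
end

section
/- Let A₀ be a finite alphabet, R₀ a finite set of nonempty cyclically reduced words of the free group F(A₀), t a letter not in A₀, A = A₀ ∪ {t}, and π_t : F(A) → F(A₀) the homomorphism fixing each letter of A₀ and sending t to 1. Let N_t be the set of all nonempty cyclically reduced elements of the kernel of π_t, and let V_t be the set of all words X₁ t R₁ t X₁⁻¹ t X₂ t R₂ t X₂⁻¹ t ⋯ X_k t R_k t X_k⁻¹ t with k ≥ 1, R_i ∈ R₀ ∪ R₀⁻¹, and X_i reduced words of F(A₀). Then every element W of the normal closure of R = N_t ∪ V_t in F(A) can be written as a product of at most 2 conjugates of elements of R ∪ R⁻¹. In particular, the Dehn 2-function of the presentation ⟨A ∥ N_t ∪ V_t⟩ is bounded by the constant 2. -/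
theorem aux_cyc {β : Type} [DecidableEq β] (n : ℕ) : ∀ w : FreeGroup β, w.toWord.length ≤ n →
    ∃ x r : FreeGroup β, IsCyclicallyReduced r ∧ w = x * r * x⁻¹ := by
  induction n with
  | zero =>
    intro w hw
    refine ⟨1, w, ?_, by simp⟩
    intro x y l h
    rw [h] at hw
    simp at hw
  | succ n ih =>
    intro w hw
    by_cases hc : IsCyclicallyReduced w
    · exact ⟨1, w, hc, by simp⟩
    · unfold IsCyclicallyReduced at hc
      push Not at hc
      obtain ⟨⟨a, b⟩, ⟨c, d⟩, l, h, h1, h2⟩ := hc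
      simp only at h1 h2
      subst h1
      have hd : d = !b := by cases b <;> cases d <;> simp_all
      subst hd
      have hl : (FreeGroup.mk l).toWord.length ≤ n := by
        have h3 : (FreeGroup.mk l).toWord.length ≤ l.length := FreeGroup.norm_mk_le
        rw [h] at hw
        simp at hw
        omega
      obtain ⟨x, r, hr, hx⟩ := ih _ hl
      refine ⟨FreeGroup.mk [(a, b)] * x, r, hr, ?_⟩
      have hw' : w = FreeGroup.mk [(a, b)] * FreeGroup.mk l * (FreeGroup.mk [(a, b)])⁻¹ := by
        rw [← FreeGroup.mk_toWord (x := w), h, FreeGroup.inv_mk, FreeGroup.mul_mk,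
          FreeGroup.mul_mk]
        simp [FreeGroup.invRev]
      rw [hw', hx]
      group

theorem pit_iot {α : Type} (g : FreeGroup α) : pit (iot g) = g := by
  have : (pit.comp iot : FreeGroup α →* FreeGroup α) = MonoidHom.id _ := by
    ext a
    simp [pit, iot]
  exact DFunLike.congr_fun this g

theorem pit_tt {α : Type} : pit (tt : FreeGroup (Option α)) = 1 := by
  simp [pit, tt]

theorem pit_prod {α : Type} {k : ℕ} (R X : Fin k → FreeGroup α) :
    pit (List.ofFn fun i =>
          iot (X i) * tt * iot (R i) * tt * (iot (X i))⁻¹ * tt).prod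
      = (List.ofFn fun i => X i * R i * (X i)⁻¹).prod := by
  rw [map_list_prod, List.map_ofFn]
  congr 2
  funext i
  simp [pit_iot, pit_tt]

theorem pit_mem {α : Type} [DecidableEq α] (R₀ : Set (FreeGroup α)) (W : FreeGroup (Option α))
    (hW : W ∈ Subgroup.normalClosure (Nt ∪ Vt R₀)) : pit W ∈ Subgroup.normalClosure R₀ := by
  have : Subgroup.normalClosure (Nt ∪ Vt R₀) ≤ (Subgroup.normalClosure R₀).comap pit := by
    apply Subgroup.normalClosure_le_normal
    rintro w (⟨_, _, h⟩ | ⟨k, _, R, X, hR, rfl⟩)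
    · have h' : pit w = 1 := h
      simp [h', one_mem]
    · simp only [SetLike.mem_coe, Subgroup.mem_comap]
      rw [pit_prod]
      apply Subgroup.list_prod_mem
      intro x hx
      rw [List.mem_ofFn] at hx
      obtain ⟨i, rfl⟩ := hx
      apply Subgroup.normalClosure_normal.conj_mem
      rcases hR i with h | h
      · exact Subgroup.subset_normalClosure h
      · exact inv_mem_iff.1 (Subgroup.subset_normalClosure h)
  exact this hW

theorem ncl_repr {α : Type} (R₀ : Set (FreeGroup α)) (g : FreeGroup α)
    (hg : g ∈ Subgroup.normalClosure R₀) :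
    ∃ k : ℕ, ∃ R X : Fin k → FreeGroup α, (∀ i, R i ∈ R₀ ∪ R₀⁻¹) ∧
      g = (List.ofFn fun i => X i * R i * (X i)⁻¹).prod := by
  have hg' : g ∈ (Subgroup.closure (Group.conjugatesOfSet R₀)).toSubmonoid := hg
  rw [Subgroup.closure_toSubmonoid] at hg'
  obtain ⟨l, hl, rfl⟩ := Submonoid.exists_list_of_mem_closure hg'
  have key : ∀ i : Fin l.length, ∃ R X : FreeGroup α, R ∈ R₀ ∪ R₀⁻¹ ∧
      l.get i = X * R * X⁻¹ := by
    intro i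
    rcases hl (l.get i) (List.get_mem _ _) with h | h
    · obtain ⟨r, hr, h⟩ := Group.mem_conjugatesOfSet_iff.1 h
      obtain ⟨c, h⟩ := isConj_iff.1 h
      exact ⟨r, c, Or.inl hr, h.symm⟩
    · obtain ⟨r, hr, h⟩ := Group.mem_conjugatesOfSet_iff.1 h
      obtain ⟨c, h⟩ := isConj_iff.1 h
      refine ⟨r⁻¹, c, Or.inr (by simpa using hr), ?_⟩
      rw [← inv_inv (l.get i), ← h]
      group
  choose R X hR hX using key
  refine ⟨l.length, R, X, hR, ?_⟩
  simp only [← hX]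
  rw [List.ofFn_get]

theorem ker_repr {α : Type} [DecidableEq α] (W : FreeGroup (Option α)) (h1 : W ≠ 1)
    (h : pit W = 1) : ∃ x r, r ∈ (Nt : Set (FreeGroup (Option α))) ∧ W = x * r * x⁻¹ := by
  obtain ⟨x, r, hr, rfl⟩ := aux_cyc _ W le_rfl
  refine ⟨x, r, ⟨?_, hr, ?_⟩, rfl⟩
  · rintro rfl
    simp at h1
  · rw [MonoidHom.mem_ker]
    simpa using h

/-- every element of the normal closure of `R = N_t ∪ V_t` is a
product of at most `2` conjugates of elements of `R ∪ R⁻¹`; the Dehn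
2-function of `⟨A ∥ N_t ∪ V_t⟩` is bounded by the constant `2`. -/
theorem referee_presentation_dehn_function {α : Type} [DecidableEq α] [Fintype α]
    (R₀ : Set (FreeGroup α)) (hfin : R₀.Finite)
    (hR₀ : ∀ r ∈ R₀, r ≠ 1 ∧ IsCyclicallyReduced r) :
    ∀ W ∈ Subgroup.normalClosure (Nt ∪ Vt R₀),
      ∃ L : ℕ, L ≤ 2 ∧ IsProdConjPM (Nt ∪ Vt R₀) L W := by
  intro W hW
  obtain ⟨k, R, X, hR, hg⟩ := ncl_repr R₀ _ (pit_mem R₀ W hW)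
  have one : ∀ U : FreeGroup (Option α), pit U = 1 → U = 1 ∨
      ∃ x r, r ∈ Nt ∪ Vt R₀ ∧ (U = x * r * x⁻¹ ∨ U = x * r⁻¹ * x⁻¹) := by
    intro U hU
    by_cases h : U = 1
    · exact Or.inl h
    · obtain ⟨x, r, hr, h⟩ := ker_repr U h hU
      exact Or.inr ⟨x, r, Or.inl hr, Or.inl h⟩
  rcases Nat.eq_zero_or_pos k with rfl | hk
  · rcases one W (by simpa using hg) with h | h
    · exact ⟨0, by norm_num, Fin.elim0, fun j => j.elim0, by simpa using h⟩
    · exact ⟨1, by norm_num, fun _ => W, fun _ => h, by simp⟩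
  · obtain ⟨V, hV⟩ : ∃ V, V = (List.ofFn fun i =>
          iot (X i) * tt * iot (R i) * tt * (iot (X i))⁻¹ * tt).prod := ⟨_, rfl⟩
    have hVm : V ∈ Nt ∪ Vt R₀ := Or.inr ⟨k, hk, R, X, hR, hV⟩
    have hpV : pit V = pit W := by rw [hV, pit_prod, hg]
    rcases one (V⁻¹ * W) (by simp [hpV]) with h | h
    · have : W = V := (inv_mul_eq_one.1 h).symm
      exact ⟨1, by norm_num, fun _ => W, fun _ => ⟨1, V, hVm, by simp [this]⟩, by simp⟩
    · refine ⟨2, le_rfl, ![V, V⁻¹ * W], ?_, by simp⟩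
      intro j
      fin_cases j
      · exact ⟨1, V, hVm, by simp⟩
      · exact h
end

section
/- Let K be a subset of the positive integers with 1 ∈ K, enumerated by a surjection i ↦ k_i from the positive integers onto K with k₁ = 1, and let R = {a^i : i ≥ 1} ∪ {a^i b^{k_i} : i ≥ 1} in the free group F(a,b). Then: (i) the normal closure of R in F(a,b) is all of F(a,b) (the presentation ⟨a, b ∥ R⟩ defines the trivial group); and (ii) for every integer k ≥ 1, the element b^k can be written as a product of at most 2 conjugates of elements of R ∪ R⁻¹ if and only if k ∈ K. -/
/-- The generator `a` of the free group `F(a, b)`. -/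
def fa : FreeGroup Bool := FreeGroup.of true

/-- The generator `b` of the free group `F(a, b)`. -/
def fb : FreeGroup Bool := FreeGroup.of false

/-- The relator set `R = {aⁱ : i ≥ 1} ∪ {aⁱ b^{k_i} : i ≥ 1}`. -/
def RJK (k : ℕ → ℕ) : Set (FreeGroup Bool) :=
  {w | ∃ i : ℕ, 1 ≤ i ∧ w = fa ^ i} ∪ {w | ∃ i : ℕ, 1 ≤ i ∧ w = fa ^ i * fb ^ k i}

/-- exponent sum of the generator `t` -/
def expS (t : Bool) : FreeGroup Bool →* Multiplicative ℤ :=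
  FreeGroup.lift (fun b => if b = t then Multiplicative.ofAdd 1 else 1)

/-- exponent sum as an integer -/
def ex (t : Bool) (g : FreeGroup Bool) : ℤ := Multiplicative.toAdd (expS t g)

lemma ex_mul (t g h) : ex t (g * h) = ex t g + ex t h := by simp [ex]
lemma ex_inv (t g) : ex t g⁻¹ = - ex t g := by simp [ex]
lemma ex_pow (t g) (n : ℕ) : ex t (g ^ n) = n * ex t g := by simp [ex]
lemma ex_one (t) : ex t 1 = 0 := by simp [ex]
lemma ex_ta : ex true fa = 1 := by simp [ex, expS, fa]
lemma ex_tb : ex true fb = 0 := by simp [ex, expS, fb]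
lemma ex_fa : ex false fa = 0 := by simp [ex, expS, fa]
lemma ex_fb : ex false fb = 1 := by simp [ex, expS, fb]

lemma conj_ex (k : ℕ → ℕ) (g : FreeGroup Bool)
    (h : ∃ x r, r ∈ RJK k ∧ (g = x * r * x⁻¹ ∨ g = x * r⁻¹ * x⁻¹)) :
    ∃ i : ℕ, 1 ≤ i ∧ ∃ c : ℤ, (c = 0 ∨ c = k i) ∧
      ((ex true g = i ∧ ex false g = c) ∨ (ex true g = -i ∧ ex false g = -c)) := by
  obtain ⟨x, r, hr, hg⟩ := h
  rcases hr with ⟨i, hi, rfl⟩ | ⟨i, hi, rfl⟩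
  · refine ⟨i, hi, 0, Or.inl rfl, ?_⟩
    rcases hg with rfl | rfl
    · left; simp [ex_mul, ex_inv, ex_pow, ex_ta, ex_fa]
    · right; simp [ex_mul, ex_inv, ex_pow, ex_ta, ex_fa]
  · refine ⟨i, hi, k i, Or.inr rfl, ?_⟩
    rcases hg with rfl | rfl
    · left; simp [ex_mul, ex_inv, ex_pow, ex_ta, ex_fa, ex_tb, ex_fb]
    · right; simp [ex_mul, ex_inv, ex_pow, ex_ta, ex_fa, ex_tb, ex_fb]

/-- Jockusch–Kapovich example: the presentation
`⟨a, b ∥ aⁱ, aⁱ b^{k_i} (i ≥ 1)⟩` defines the trivial group, and `b^k` is a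
product of at most `2` conjugates of relators or their inverses iff `k ∈ K`. -/
theorem jockusch_kapovich_example (K : Set ℕ) (hKpos : ∀ n ∈ K, 0 < n)
    (hK1 : 1 ∈ K) (k : ℕ → ℕ) (hkK : ∀ i : ℕ, 1 ≤ i → k i ∈ K)
    (hsurj : ∀ n ∈ K, ∃ i : ℕ, 1 ≤ i ∧ k i = n) (hk1 : k 1 = 1) :
    Subgroup.normalClosure (RJK k) = ⊤ ∧
    ∀ m : ℕ, 1 ≤ m →
      ((∃ L : ℕ, L ≤ 2 ∧ IsProdConjPM (RJK k) L (fb ^ m)) ↔ m ∈ K) := by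
  constructor
  · have ha : fa ∈ Subgroup.normalClosure (RJK k) :=
      Subgroup.subset_normalClosure (Or.inl ⟨1, le_rfl, by simp⟩)
    have hab : fa * fb ∈ Subgroup.normalClosure (RJK k) :=
      Subgroup.subset_normalClosure (Or.inr ⟨1, le_rfl, by simp [hk1]⟩)
    have hb : fb ∈ Subgroup.normalClosure (RJK k) :=
      (Subgroup.mul_mem_cancel_left _ ha).1 hab
    rw [eq_top_iff, ← FreeGroup.closure_range_of, Subgroup.closure_le]
    rintro _ ⟨t, rfl⟩
    cases t
    · exact hb
    · exact ha
  · intro m hm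
    constructor
    · rintro ⟨L, hL, f, hf, hW⟩
      have hA := congrArg (ex true) hW
      have hB := congrArg (ex false) hW
      rw [ex_pow, ex_tb] at hA
      rw [ex_pow, ex_fb] at hB
      interval_cases L
      · simp [ex_one] at hB
        omega
      · obtain ⟨i, hi, c, hc, h⟩ := conj_ex k _ (hf 0)
        simp at hA
        omega
      · obtain ⟨i, hi, c, hc, h⟩ := conj_ex k _ (hf 0)
        obtain ⟨j, hj, d, hd, h'⟩ := conj_ex k _ (hf 1)
        simp [List.ofFn_succ, ex_mul] at hA hB
        have hij : i = j := by omega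
        subst hij
        have : m = k i := by omega
        rw [this]
        exact hkK i hi
    · intro hmK
      obtain ⟨i, hi, rfl⟩ := hsurj m hmK
      refine ⟨2, le_rfl, ![(fa ^ i)⁻¹, fa ^ i * fb ^ k i], ?_, ?_⟩
      · intro j
        fin_cases j
        · exact ⟨1, fa ^ i, Or.inl ⟨i, hi, rfl⟩, Or.inr (by simp)⟩
        · exact ⟨1, fa ^ i * fb ^ k i, Or.inr ⟨i, hi, rfl⟩, Or.inl (by simp)⟩
      · simp [List.ofFn_succ]
end

section
/- Let R = {a^i b a^{-i} b^{-1} : i ≥ 1} in the free group F(a,b). Then the normal closure of R in F(a,b) equals the commutator subgroup [F(a,b), F(a,b)] (so the presentation ⟨a, b ∥ R⟩ defines the free abelian group of rank 2), and there exists a constant C > 0 such that every element W of [F(a,b), F(a,b)] with |W| ≤ x can be written as a product of at most C·x conjugates of elements of R ∪ R⁻¹; that is, the Dehn 2-function of this presentation is bounded by a linear function. -/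
/-- The relator set `R = {aⁱ b a⁻ⁱ b⁻¹ : i ≥ 1}`. -/
def Rab : Set (FreeGroup Bool) :=
  {w | ∃ i : ℕ, 1 ≤ i ∧ w = fa ^ i * fb * (fa ^ i)⁻¹ * fb⁻¹}

def ConjL (W : FreeGroup Bool) : Prop :=
  ∃ x r, r ∈ Rab ∧ (W = x * r * x⁻¹ ∨ W = x * r⁻¹ * x⁻¹)

def PL (L : ℕ) (W : FreeGroup Bool) : Prop :=
  ∃ l : List (FreeGroup Bool), l.length ≤ L ∧ (∀ y ∈ l, ConjL y) ∧ W = l.prod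

theorem ConjL.conj {W : FreeGroup Bool} (h : ConjL W) (g : FreeGroup Bool) :
    ConjL (g * W * g⁻¹) := by
  obtain ⟨x, r, hr, h | h⟩ := h
  · exact ⟨g * x, r, hr, Or.inl (by rw [h]; group)⟩
  · exact ⟨g * x, r, hr, Or.inr (by rw [h]; group)⟩

theorem PL.conj {L : ℕ} {W : FreeGroup Bool} (h : PL L W) (g : FreeGroup Bool) :
    PL L (g * W * g⁻¹) := by
  obtain ⟨l, hl, hc, rfl⟩ := h
  refine ⟨l.map (MulAut.conj g), by simpa using hl, ?_, ?_⟩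
  · intro y hy
    obtain ⟨z, hz, rfl⟩ := List.mem_map.1 hy
    exact (hc z hz).conj g
  · rw [← map_list_prod]; simp

theorem PL.mono {L M : ℕ} {W : FreeGroup Bool} (h : PL L W) (hLM : L ≤ M) : PL M W := by
  obtain ⟨l, hl, hc⟩ := h
  exact ⟨l, hl.trans hLM, hc⟩

theorem PL.mul {L M : ℕ} {V W : FreeGroup Bool} (h : PL L V) (h' : PL M W) :
    PL (L + M) (V * W) := by
  obtain ⟨l, hl, hc, rfl⟩ := h
  obtain ⟨l', hl', hc', rfl⟩ := h'
  refine ⟨l ++ l', by simp; omega, ?_, by simp⟩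
  intro y hy
  rcases List.mem_append.1 hy with h | h
  · exact hc y h
  · exact hc' y h

theorem PL_conj {W : FreeGroup Bool} (h : ConjL W) : PL 1 W :=
  ⟨[W], by simp, by simpa using h, by simp⟩

theorem PL_b (n : ℤ) : PL 1 (fb * fa ^ n * fb⁻¹ * (fa ^ n)⁻¹) := by
  rcases lt_trichotomy n 0 with h | h | h
  · obtain ⟨i, rfl⟩ : ∃ i : ℕ, n = -(i : ℤ) := ⟨n.natAbs, by omega⟩
    refine PL_conj ⟨(fa ^ i)⁻¹, _, ⟨i, by omega, rfl⟩, Or.inl ?_⟩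
    simp [mul_assoc]
  · subst h
    exact ⟨[], by simp, by simp, by simp⟩
  · obtain ⟨i, rfl⟩ : ∃ i : ℕ, n = (i : ℤ) := ⟨n.natAbs, by omega⟩
    refine PL_conj ⟨1, _, ⟨i, by omega, rfl⟩, Or.inr ?_⟩
    simp [mul_assoc]

theorem PL.inv {L : ℕ} {W : FreeGroup Bool} (h : PL L W) : PL L W⁻¹ := by
  obtain ⟨l, hl, hc, rfl⟩ := h
  refine ⟨(l.map (·⁻¹)).reverse, by simpa using hl, ?_, by rw [List.prod_inv_reverse]⟩
  intro y hy
  obtain ⟨z, hz, rfl⟩ := List.mem_map.1 (List.mem_reverse.1 hy)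
  obtain ⟨x, r, hr, h | h⟩ := hc z hz
  · exact ⟨x, r, hr, Or.inr (by rw [h]; group)⟩
  · exact ⟨x, r, hr, Or.inl (by rw [h]; group)⟩

theorem normal_form (w : List (Bool × Bool)) :
    ∃ P : FreeGroup Bool, ∃ n m : ℤ, PL w.length P ∧ FreeGroup.mk w = P * fa ^ n * fb ^ m := by
  induction w with
  | nil => exact ⟨1, 0, 0, ⟨[], by simp, by simp, by simp⟩, by simp [FreeGroup.one_eq_mk]⟩
  | cons c w ih =>
    obtain ⟨P, n, m, hP, hw⟩ := ih
    have hc : FreeGroup.mk (c :: w) = FreeGroup.mk [c] * FreeGroup.mk w := by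
      rw [FreeGroup.mul_mk]; rfl
    rw [hc, hw]
    have ta : FreeGroup.mk [(true, true)] = fa := rfl
    have ta' : FreeGroup.mk [(true, false)] = fa⁻¹ := rfl
    have tb : FreeGroup.mk [(false, true)] = fb := rfl
    have tb' : FreeGroup.mk [(false, false)] = fb⁻¹ := rfl
    rcases c with ⟨_ | _, _ | _⟩
    · refine ⟨(fb⁻¹ * P * fb⁻¹⁻¹) *
        (fb⁻¹ * (fb * fa ^ n * fb⁻¹ * (fa ^ n)⁻¹)⁻¹ * fb⁻¹⁻¹), n, m - 1,
        (hP.conj _).mul ((PL_b n).inv.conj _), ?_⟩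
      rw [tb']; group
    · refine ⟨(fb * P * fb⁻¹) * (fb * fa ^ n * fb⁻¹ * (fa ^ n)⁻¹), n, m + 1,
        (hP.conj _).mul (PL_b n), ?_⟩
      rw [tb]; group
    · refine ⟨fa⁻¹ * P * fa⁻¹⁻¹, n - 1, m, (hP.conj _).mono (by simp), ?_⟩
      rw [ta']; group
    · refine ⟨fa * P * fa⁻¹, n + 1, m, (hP.conj _).mono (by simp), ?_⟩
      rw [ta]; group

theorem Rab_sub : Rab ⊆ (commutator (FreeGroup Bool) : Set (FreeGroup Bool)) := by
  rintro _ ⟨i, _, rfl⟩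
  exact Subgroup.commutator_mem_commutator (Subgroup.mem_top _) (Subgroup.mem_top _)

theorem PL.mem {L : ℕ} {W : FreeGroup Bool} (h : PL L W) :
    W ∈ Subgroup.normalClosure Rab := by
  obtain ⟨l, _, hc, rfl⟩ := h
  apply Subgroup.list_prod_mem
  intro y hy
  have hn : (Subgroup.normalClosure Rab).Normal := Subgroup.normalClosure_normal
  obtain ⟨x, r, hr, h | h⟩ := hc y hy
  · rw [h]; exact hn.conj_mem _ (Subgroup.subset_normalClosure hr) _
  · rw [h]; exact hn.conj_mem _ (inv_mem (Subgroup.subset_normalClosure hr)) _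

theorem nc_le : Subgroup.normalClosure Rab ≤ commutator (FreeGroup Bool) :=
  Subgroup.normalClosure_le_normal Rab_sub

theorem PL_of_mem {W : FreeGroup Bool} (hW : W ∈ commutator (FreeGroup Bool)) :
    PL (FreeGroup.norm W) W := by
  obtain ⟨P, n, m, hP, h⟩ := normal_form W.toWord
  rw [FreeGroup.mk_toWord] at h
  have key : ∀ f : FreeGroup Bool →* Multiplicative ℤ, f fa ^ n * f fb ^ m = 1 := by
    intro f
    have h1 : f W = 1 := Abelianization.commutator_subset_ker f hW
    have h2 : f P = 1 := Abelianization.commutator_subset_ker f (nc_le hP.mem)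
    rw [h] at h1
    simpa [h2] using h1
  have hn : n = 0 := by
    have := key (FreeGroup.lift fun c => if c then Multiplicative.ofAdd 1 else 1)
    simpa [fa, fb, ← ofAdd_zsmul] using this
  have hm : m = 0 := by
    have := key (FreeGroup.lift fun c => if c then 1 else Multiplicative.ofAdd 1)
    simpa [fa, fb, ← ofAdd_zsmul] using this
  subst hn hm
  have : W = P := by simpa using h
  rw [this] at hP ⊢
  exact hP

/-- the presentation `⟨a, b ∥ aⁱba⁻ⁱb⁻¹ (i ≥ 1)⟩` defines the
free abelian group of rank 2 and its Dehn 2-function is bounded by a linear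
function. -/
theorem abelianized_example :
    Subgroup.normalClosure Rab = commutator (FreeGroup Bool) ∧
    ∃ C : ℝ, 0 < C ∧
      ∀ x : ℕ, ∀ W ∈ commutator (FreeGroup Bool), FreeGroup.norm W ≤ x →
        ∃ L : ℕ, (L : ℝ) ≤ C * (x : ℝ) ∧ IsProdConjPM Rab L W := by
  refine ⟨le_antisymm nc_le fun W hW => (PL_of_mem hW).mem, 1, one_pos, ?_⟩
  intro x W hW hx
  obtain ⟨l, hl, hc, hp⟩ := PL_of_mem hW
  refine ⟨l.length, ?_, l.get, fun j => hc _ (List.get_mem l j), ?_⟩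
  · rw [one_mul]; exact_mod_cast hl.trans hx
  · rw [List.ofFn_get]; exact hp
end
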